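/- Fix (q₁, …, qₙ, t) and write n = m + k. For ν = 1, …, k let φ_ν(q₁, …, qₙ, q̇₁, …, q̇ₙ, t) be positively homogeneous of (possibly different) degrees σ_ν in the velocities (q̇₁, …, q̇ₙ) ∈ D, where D ⊆ ℝ^n is a cone. Suppose the constraints are made explicit on a cone U ⊆ ℝ^m by functions α_ν(q₁, …, qₙ, q̇₁, …, q̇_m, t): for each (q̇₁, …, q̇_m) ∈ U, the vector (α₁, …, α_k) is the unique η ∈ ℝ^k with ((q̇₁, …, q̇_m), η) ∈ D and φ_ν(q, (q̇₁, …, q̇_m, η), t) = 0 for all ν. Then each α_ν is positively homogeneous of degree 1 in (q̇₁, …, q̇_m); consequently, at every point where α_ν is differentiable in the velocities, the condition ᾱ_ν = α_ν holds, where ᾱ_ν := Σ_{r=1}^m (∂α_ν/∂q̇_r) q̇_r. -/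

import Mathlib

open scoped BigOperators

/-- Fix `(q, t)` and write `n = m + k`, identifying the velocity space `ℝ^n` with
`ℝ^m × ℝ^k`.  If the constraint functions `φ_ν (q, ·, t)` are positively homogeneous of
(possibly different) degrees `σ_ν` in the velocities on a cone `D ⊆ ℝ^m × ℝ^k`, and the
constraints are made explicit on a cone `U ⊆ ℝ^m` by functions `α_ν (q, ·, t)` — i.e. for
each `u ∈ U` the vector `(α₁, …, α_k)` is the unique `η` with `(u, η) ∈ D` and
`φ_ν (q, (u, η), t) = 0` for all `ν` — then each `α_ν` is positively homogeneous of
degree `1` in `(q̇₁, …, q̇_m)`; consequently, wherever `α_ν` is differentiable in the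
velocities, the Euler condition `ᾱ_ν = α_ν` holds. -/
theorem explicit_constraints_homogeneous_and_abar_eq_alpha
    {m k : ℕ} (q : Fin (m + k) → ℝ) (t : ℝ)
    {D : Set ((Fin m → ℝ) × (Fin k → ℝ))}
    (hDcone : ∀ v ∈ D, ∀ lam : ℝ, 0 < lam → lam • v ∈ D)
    (φ : Fin k → (Fin (m + k) → ℝ) → ((Fin m → ℝ) × (Fin k → ℝ)) → ℝ → ℝ)
    (σ : Fin k → ℝ)
    (hφ : ∀ ν : Fin k, ∀ v ∈ D, ∀ lam : ℝ, 0 < lam →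
        φ ν q (lam • v) t = lam ^ σ ν * φ ν q v t)
    {U : Set (Fin m → ℝ)}
    (hUcone : ∀ u ∈ U, ∀ lam : ℝ, 0 < lam → lam • u ∈ U)
    (α : Fin k → (Fin (m + k) → ℝ) → (Fin m → ℝ) → ℝ → ℝ)
    (hmem : ∀ u ∈ U, (u, fun ν => α ν q u t) ∈ D)
    (hzero : ∀ u ∈ U, ∀ ν : Fin k, φ ν q (u, fun ν' => α ν' q u t) t = 0)
    (huniq : ∀ u ∈ U, ∀ η : Fin k → ℝ, (u, η) ∈ D →
        (∀ ν : Fin k, φ ν q (u, η) t = 0) → η = fun ν => α ν q u t) :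
    (∀ ν : Fin k, ∀ u ∈ U, ∀ lam : ℝ, 0 < lam →
        α ν q (lam • u) t = lam * α ν q u t)
    ∧
    (∀ ν : Fin k, ∀ u ∈ U, DifferentiableAt ℝ (fun u' => α ν q u' t) u →
        ∑ r, fderiv ℝ (fun u' => α ν q u' t) u (Pi.single r 1) * u r = α ν q u t) := by
  have hom : ∀ ν : Fin k, ∀ u ∈ U, ∀ lam : ℝ, 0 < lam →
      α ν q (lam • u) t = lam * α ν q u t := by
    intro ν u hu lam hl
    have h := huniq (lam • u) (hUcone u hu lam hl) (lam • fun ν => α ν q u t)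
      (hDcone _ (hmem u hu) lam hl) (fun ν' => by
        have h1 := hφ ν' _ (hmem u hu) lam hl
        rw [hzero u hu ν', mul_zero] at h1
        exact h1)
    have h2 := congrFun h ν
    simpa using h2.symm
  refine ⟨hom, ?_⟩
  intro ν u hu hd
  set f : (Fin m → ℝ) → ℝ := fun u' => α ν q u' t with hf
  have hsum : ∑ r, fderiv ℝ f u (Pi.single r 1) * u r = fderiv ℝ f u u := by
    have hu' : u = ∑ r, u r • (Pi.single r (1 : ℝ) : Fin m → ℝ) := by
      ext j
      simp [Finset.sum_apply, Pi.single_apply]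
    have h := congrArg (fderiv ℝ f u) hu'
    rw [map_sum] at h
    rw [h]
    refine Finset.sum_congr rfl fun r _ => ?_
    rw [map_smul, smul_eq_mul, mul_comm]
  rw [hsum]
  have hg : HasDerivAt (fun s : ℝ => s • u) u 1 := by
    simpa using (hasDerivAt_id (1 : ℝ)).smul_const u
  have hd' : HasFDerivAt f (fderiv ℝ f u) ((1 : ℝ) • u) := by
    rw [one_smul]; exact hd.hasFDerivAt
  have h1 : HasDerivAt (fun s : ℝ => f (s • u)) (fderiv ℝ f u u) 1 :=
    HasFDerivAt.comp_hasDerivAt (f := fun s : ℝ => s • u) (l := f) (1 : ℝ) hd' hg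
  have h2 : HasDerivAt (fun s : ℝ => s * f u) (f u) 1 := by
    simpa using (hasDerivAt_id (1 : ℝ)).mul_const (f u)
  have h3 : (fun s : ℝ => f (s • u)) =ᶠ[nhds 1] fun s : ℝ => s * f u := by
    filter_upwards [lt_mem_nhds (zero_lt_one : (0 : ℝ) < 1)] with s hs
    exact hom ν u hu s hs
  exact h1.unique (h2.congr_of_eventuallyEq h3)
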